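/- For a connected graph G of diameter 4 with h(G) ≥ 3, cfc(G) = h(G); and if h(G) ≤ 1 then cfc(G) = 2. -/

import Mathlib

open SimpleGraph

/-- An edge coloring makes `G` conflict-free connected if every pair of distinct
vertices is joined by a path on which some color appears on exactly one edge. -/
def IsCFConnColoring {V : Type*} (G : SimpleGraph V) (c : Sym2 V → ℕ) : Prop :=
  ∀ u v : V, u ≠ v → ∃ p : G.Walk u v, p.IsPath ∧
    ∃ col : ℕ, (p.edges.filter (fun e => c e = col)).length = 1

/-- The conflict-free connection number of `G`. -/
noncomputable def cfConn {V : Type*} (G : SimpleGraph V) : ℕ :=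
  sInf {k | ∃ c : Sym2 V → ℕ, (∀ e ∈ G.edgeSet, c e < k) ∧ IsCFConnColoring G c}

/-- The subgraph `C(G)` of `G` induced by the set of cut-edges (bridges). -/
def bridgeGraph {V : Type*} (G : SimpleGraph V) : SimpleGraph V :=
  SimpleGraph.fromEdgeSet {e | G.IsBridge e}

/-- `h(G)`: the maximum of `cfConn` over the components of the forest of cut-edges
of `G` (it equals `0` if `G` has no cut-edge). -/
noncomputable def hG {V : Type*} (G : SimpleGraph V) : ℕ :=
  sSup {n | ∃ comp : (bridgeGraph G).ConnectedComponent,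
    n = cfConn ((bridgeGraph G).induce comp.supp)}

section PathIn

variable {V : Type*} {G : SimpleGraph V} {κ : Sym2 V → ℕ} {i : ℕ}

/-- There is a path from `x` to `y` with all vertices in `W` on which exactly `n` edges
have `κ`-value `i`. -/
def PathIn (G : SimpleGraph V) (κ : Sym2 V → ℕ) (i : ℕ) (W : Set V) (x y : V) (n : ℕ) : Prop :=
  ∃ p : G.Walk x y, p.IsPath ∧ (∀ z ∈ p.support, z ∈ W) ∧ p.edges.countP (fun e => κ e = i) = n

theorem PathIn.nil {W : Set V} {x : V} (hx : x ∈ W) : PathIn G κ i W x x 0 :=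
  ⟨Walk.nil, by simp, by simpa using hx, by simp⟩

theorem PathIn.left_mem {W : Set V} {x y : V} {n : ℕ} (h : PathIn G κ i W x y n) : x ∈ W := by
  obtain ⟨p, -, h, -⟩ := h
  exact h _ p.start_mem_support

theorem PathIn.symm {W : Set V} {x y : V} {n : ℕ} (h : PathIn G κ i W x y n) :
    PathIn G κ i W y x n := by
  obtain ⟨p, hp, h, hn⟩ := h
  exact ⟨p.reverse, hp.reverse, by simpa using h, by simpa using hn⟩

theorem PathIn.right_mem {W : Set V} {x y : V} {n : ℕ} (h : PathIn G κ i W x y n) : y ∈ W :=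
  h.symm.left_mem

theorem PathIn.mono {W W' : Set V} {x y : V} {n : ℕ} (h : PathIn G κ i W x y n) (hW : W ⊆ W') :
    PathIn G κ i W' x y n := by
  obtain ⟨p, hp, h, hn⟩ := h
  exact ⟨p, hp, fun z hz => hW (h z hz), hn⟩

theorem PathIn.append {A B : Set V} {x y z : V} {m n : ℕ} (h₁ : PathIn G κ i A x y m)
    (h₂ : PathIn G κ i B y z n) (hAB : ∀ t ∈ A, t ∈ B → t = y) :
    PathIn G κ i (A ∪ B) x z (m + n) := by
  obtain ⟨p, hp, hpA, hm⟩ := h₁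
  obtain ⟨q, hq, hqB, hn⟩ := h₂
  refine ⟨p.append q, ?_, ?_, ?_⟩
  · rw [Walk.isPath_def, Walk.support_append, List.nodup_append']
    refine ⟨hp.support_nodup, hq.support_nodup.tail, fun t ht ht' => ?_⟩
    have hty := hAB t (hpA t ht) (hqB t (List.mem_of_mem_tail ht'))
    have hnd := hq.support_nodup
    rw [← Walk.cons_tail_support, List.nodup_cons] at hnd
    exact hnd.1 (hty ▸ ht')
  · intro t ht
    rcases (Walk.mem_support_append_iff _ _).1 ht with h | h
    · exact Or.inl (hpA t h)
    · exact Or.inr (hqB t h)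
  · rw [Walk.edges_append, List.countP_append, hm, hn]

theorem PathIn.congr {κ' : Sym2 V → ℕ} {W : Set V} {x y : V} {n : ℕ}
    (h : PathIn G κ i W x y n) (hκ : ∀ e : Sym2 V, (∀ z ∈ e, z ∈ W) → κ' e = κ e) :
    PathIn G κ' i W x y n := by
  obtain ⟨p, hp, hW, hn⟩ := h
  refine ⟨p, hp, hW, ?_⟩
  rw [← hn]
  refine List.countP_congr fun e he => ?_
  rw [hκ e fun z hz => hW z (Walk.mem_support_of_mem_edges he hz)]

theorem PathIn.of_adj {x y : V} (h : G.Adj x y) :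
    PathIn G κ i {x, y} x y (if κ s(x, y) = i then 1 else 0) :=
  ⟨h.toWalk, Walk.IsPath.of_adj h, by simp [SimpleGraph.Adj.toWalk],
    by simp [SimpleGraph.Adj.toWalk, List.countP_cons]⟩

theorem exists_pathIn_split {v q : V} {p : G.Walk v q} (hp : p.IsPath) {y : V}
    (hy : y ∈ p.support) (κ : Sym2 V → ℕ) (i : ℕ) :
    ∃ A B : Set V, ∃ m n : ℕ, PathIn G κ i A v y m ∧ PathIn G κ i B y q n ∧
      (∀ t ∈ A, t ∈ B → t = y) ∧ (∀ t ∈ A, t ∈ p.support) ∧ (∀ t ∈ B, t ∈ p.support) ∧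
      m + n = p.edges.countP (fun e => κ e = i) := by
  obtain ⟨p₁, p₂, rfl⟩ := Walk.mem_support_iff_exists_append.1 hy
  refine ⟨{t | t ∈ p₁.support}, {t | t ∈ p₂.support}, _, _,
    ⟨p₁, hp.of_append_left, fun _ h => h, rfl⟩, ⟨p₂, hp.of_append_right, fun _ h => h, rfl⟩,
    ?_, ?_, ?_, ?_⟩
  · intro t h₁ h₂
    by_contra hne
    exact hp.ne_of_mem_support_of_append hne h₁ h₂ rfl
  · intro t ht
    exact (Walk.mem_support_append_iff _ _).2 (Or.inl ht)
  · intro t ht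
    exact (Walk.mem_support_append_iff _ _).2 (Or.inr ht)
  · rw [Walk.edges_append, List.countP_append]

theorem exists_pathIn_split₂ {v q : V} {p : G.Walk v q} (hp : p.IsPath) {x y : V}
    (hx : x ∈ p.support) (hy : y ∈ p.support) (hxy : x ≠ y) (κ : Sym2 V → ℕ) (i : ℕ) :
    ∃ x' y' : V, (x' = x ∧ y' = y ∨ x' = y ∧ y' = x) ∧
    ∃ A B C : Set V, ∃ a b c : ℕ, PathIn G κ i A v x' a ∧ PathIn G κ i B x' y' b ∧
      PathIn G κ i C y' q c ∧ (∀ t ∈ A, t ∈ C → False) ∧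
      (∀ t ∈ A, t ∈ p.support) ∧ (∀ t ∈ B, t ∈ p.support) ∧ (∀ t ∈ C, t ∈ p.support) ∧
      a + b + c = p.edges.countP (fun e => κ e = i) := by
  have key : ∀ x y : V, x ≠ y → ∀ (p₁ : G.Walk v y) (p₂ : G.Walk y q), x ∈ p₁.support →
      p = p₁.append p₂ → ∃ A B C : Set V, ∃ a b c : ℕ,
      PathIn G κ i A v x a ∧ PathIn G κ i B x y b ∧
      PathIn G κ i C y q c ∧ (∀ t ∈ A, t ∈ C → False) ∧
      (∀ t ∈ A, t ∈ p.support) ∧ (∀ t ∈ B, t ∈ p.support) ∧ (∀ t ∈ C, t ∈ p.support) ∧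
      a + b + c = p.edges.countP (fun e => κ e = i) := by
    rintro x y hxy p₁ p₂ hx₁ rfl
    obtain ⟨A, B, a, b, hA, hB, hAB, hA', hB', hab⟩ :=
      exists_pathIn_split hp.of_append_left hx₁ κ i
    refine ⟨A, B, {t | t ∈ p₂.support}, a, b, _, hA, hB,
      ⟨p₂, hp.of_append_right, fun _ h => h, rfl⟩, ?_, ?_, ?_, ?_, ?_⟩
    · intro t h₁ h₂
      by_cases hty : t = y
      · subst hty
        exact hxy (hAB t h₁ hB.right_mem).symm
      · exact hp.ne_of_mem_support_of_append hty (hA' t h₁) h₂ rfl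
    · exact fun t ht => (Walk.mem_support_append_iff _ _).2 (Or.inl (hA' t ht))
    · exact fun t ht => (Walk.mem_support_append_iff _ _).2 (Or.inl (hB' t ht))
    · exact fun t ht => (Walk.mem_support_append_iff _ _).2 (Or.inr ht)
    · rw [Walk.edges_append, List.countP_append, hab]
  obtain ⟨p₁, p₂, h⟩ := Walk.mem_support_iff_exists_append.1 hy
  have hx' := hx
  rw [h, Walk.mem_support_append_iff] at hx'
  rcases hx' with h' | h'
  · exact ⟨x, y, Or.inl ⟨rfl, rfl⟩, key x y hxy p₁ p₂ h' h⟩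
  · obtain ⟨p₃, p₄, rfl⟩ := Walk.mem_support_iff_exists_append.1 h'
    exact ⟨y, x, Or.inr ⟨rfl, rfl⟩, key y x hxy.symm (p₁.append p₃) p₄
      ((Walk.mem_support_append_iff _ _).2 (Or.inl p₁.end_mem_support))
      (by rw [h, Walk.append_assoc])⟩

/-- The two arcs of a cycle between two of its vertices. -/
theorem pathIn_of_cycle {v w : V} {p : G.Walk v w} (hp : p.IsPath) (hvw : G.Adj v w)
    (hcount : p.edges.countP (fun e => κ e = i) + (if κ s(v, w) = i then 1 else 0) = 1)
    {x y : V} (hx : x ∈ p.support) (hy : y ∈ p.support) (hxy : x ≠ y) :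
    PathIn G κ i {t | t ∈ p.support} x y 0 ∧ PathIn G κ i {t | t ∈ p.support} x y 1 := by
  obtain ⟨x', y', hx'y', A, B, C, a, b, c, hA, hB, hC, hAC, hA', hB', hC', habc⟩ :=
    exists_pathIn_split₂ hp hx hy hxy κ i
  have harc₁ : PathIn G κ i {t | t ∈ p.support} x' y' b := hB.mono hB'
  have harc₂ : PathIn G κ i {t | t ∈ p.support} x' y'
      (a + ((if κ s(v, w) = i then 1 else 0) + c)) := by
    refine (hA.symm.append (((PathIn.of_adj hvw).append hC.symm ?_)) ?_).mono ?_
    · rintro t (rfl | rfl) ht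
      · exact (hAC _ hA.left_mem ht).elim
      · rfl
    · rintro t h₁ ((rfl | rfl) | h₂)
      · rfl
      · exact (hAC _ h₁ hC.right_mem).elim
      · exact (hAC _ h₁ h₂).elim
    · rintro t (h | (rfl | rfl) | h)
      · exact hA' t h
      · exact p.start_mem_support
      · exact p.end_mem_support
      · exact hC' t h
  have key : PathIn G κ i {t | t ∈ p.support} x' y' 0 ∧
      PathIn G κ i {t | t ∈ p.support} x' y' 1 := by
    generalize (if κ s(v, w) = i then 1 else 0) = d at *
    rcases (by omega : (b = 0 ∧ a + (d + c) = 1) ∨ (b = 1 ∧ a + (d + c) = 0)) with h | h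
    · exact ⟨h.1 ▸ harc₁, h.2 ▸ harc₂⟩
    · exact ⟨h.2 ▸ harc₂, h.1 ▸ harc₁⟩
  rcases hx'y' with ⟨rfl, rfl⟩ | ⟨rfl, rfl⟩
  · exact key
  · exact ⟨key.1.symm, key.2.symm⟩

end PathIn

section Bridges

variable {V : Type*} {G : SimpleGraph V}

theorem bridgeGraph_adj {x y : V} : (bridgeGraph G).Adj x y ↔ G.IsBridge s(x, y) ∧ x ≠ y := by
  simp [bridgeGraph]

theorem bridgeGraph_le (hG : G.Connected) : bridgeGraph G ≤ G := fun x y h =>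
  (bridgeGraph_adj.1 h).1.reachable_iff_adj.1 (hG.preconnected x y)

theorem isBridge_of_mem_edges {u v : V} {b : (bridgeGraph G).Walk u v} {e : Sym2 V}
    (he : e ∈ b.edges) : G.IsBridge e := by
  have := b.edges_subset_edgeSet he
  induction e with
  | h x y => exact (bridgeGraph_adj.1 this).1

/-- A path made of bridges is the only path between its ends. -/
theorem edges_eq_of_bridge_path (hG : G.Connected) {u v : V} (b : (bridgeGraph G).Walk u v)
    (hb : b.IsPath) (p : G.Walk u v) (hp : p.IsPath) : p.edges = b.edges := by
  induction b with
  | nil => rw [(Walk.isPath_iff_nil.1 hp).eq_nil]; simp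
  | @cons u w v h b ih =>
    rw [Walk.cons_isPath_iff] at hb
    have hmem : s(u, w) ∈ p.edges := by
      have := isBridge_iff_forall_walk_mem_edges.1 (bridgeGraph_adj.1 h).1
        (p.append (b.mapLe (bridgeGraph_le hG)).reverse)
      rw [Walk.edges_append, List.mem_append] at this
      refine this.resolve_right fun hbad => hb.2 ?_
      rw [Walk.edges_reverse, List.mem_reverse, Walk.edges_mapLe_eq_edges] at hbad
      exact Walk.fst_mem_support_of_mem_edges _ hbad
    have hw := hp.eq_snd_of_mem_edges hmem
    cases p with
    | nil => simp at hmem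
    | cons h' p =>
      rw [Walk.snd_cons] at hw
      subst hw
      rw [Walk.edges_cons, Walk.edges_cons, ih hb.1 p hp.of_cons]

theorem mem_edges_of_isBridge {e : Sym2 V} (he : G.IsBridge e) {u v : V} {p : G.Walk u v}
    (hp : p.IsTrail) (hep : e ∈ p.edges) (q : G.Walk u v) : e ∈ q.edges := by
  induction p with
  | nil => simp at hep
  | @cons u w v h p ih =>
    rw [Walk.isTrail_cons] at hp
    rw [Walk.edges_cons, List.mem_cons] at hep
    rcases hep with rfl | hep
    · have := isBridge_iff_forall_walk_mem_edges.1 he (q.append p.reverse)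
      rw [Walk.edges_append, List.mem_append, Walk.edges_reverse, List.mem_reverse] at this
      exact this.resolve_right hp.2
    · have := ih hp.1 hep (Walk.cons h.symm q)
      rw [Walk.edges_cons, List.mem_cons] at this
      refine this.resolve_left ?_
      rintro rfl
      exact hp.2 (Sym2.eq_swap ▸ hep)

open Classical in
theorem countP_bridges_eq (c : Sym2 V → ℕ) (j : ℕ) {u v : V} {p q : G.Walk u v}
    (hp : p.IsPath) (hq : q.IsPath) :
    p.edges.countP (fun e => decide (G.IsBridge e ∧ c e = j)) =
      q.edges.countP (fun e => decide (G.IsBridge e ∧ c e = j)) := by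
  rw [List.countP_eq_length_filter, List.countP_eq_length_filter]
  refine ((List.perm_ext_iff_of_nodup (hp.isTrail.edges_nodup.filter _)
    (hq.isTrail.edges_nodup.filter _)).2 fun e => ?_).length_eq
  simp only [List.mem_filter, decide_eq_true_eq]
  exact ⟨fun h => ⟨mem_edges_of_isBridge h.2.1 hp.isTrail h.1 q, h.2⟩,
    fun h => ⟨mem_edges_of_isBridge h.2.1 hq.isTrail h.1 p, h.2⟩⟩

theorem exists_path_to_first_mem {H : SimpleGraph V} {W : Set V} {v w : V} (p : H.Walk v w)
    (hw : w ∈ W) : ∃ q ∈ W, ∃ p' : H.Walk v q, p'.IsPath ∧ ∀ z ∈ p'.support, z ∈ W → z = q := by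
  classical
  suffices h : ∃ q ∈ W, ∃ p' : H.Walk v q, ∀ z ∈ p'.support, z ∈ W → z = q by
    obtain ⟨q, hq, p', hp'⟩ := h
    exact ⟨q, hq, p'.bypass, p'.bypass_isPath,
      fun z hz => hp' z (p'.support_bypass_subset_support hz)⟩
  induction p with
  | nil => exact ⟨_, hw, Walk.nil, by simp⟩
  | @cons v x w h p ih =>
    by_cases hv : v ∈ W
    · exact ⟨v, hv, Walk.nil, by simp⟩
    · obtain ⟨q, hq, p', hp'⟩ := ih hw
      refine ⟨q, hq, Walk.cons h p', fun z hz hzW => ?_⟩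
      rw [Walk.support_cons, List.mem_cons] at hz
      rcases hz with rfl | hz
      · exact (hv hzW).elim
      · exact hp' z hz hzW

end Bridges

section Labelling

variable {V : Type*} {G : SimpleGraph V} {κ : Sym2 V → ℕ} {i : ℕ} {W : Set V}

/-- Any two vertices of `W` are joined inside `W` by a path without edges labelled `i`, and,
unless they are joined by bridges only, also by a path with exactly one such edge. -/
def GoodOn (G : SimpleGraph V) (κ : Sym2 V → ℕ) (i : ℕ) (W : Set V) : Prop :=
  ∀ x ∈ W, ∀ y ∈ W, PathIn G κ i W x y 0 ∧
    (¬ (bridgeGraph G).Reachable x y → PathIn G κ i W x y 1)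

theorem GoodOn.congr {κ' : Sym2 V → ℕ} (h : GoodOn G κ i W)
    (hκ : ∀ e : Sym2 V, (∀ z ∈ e, z ∈ W) → κ' e = κ e) : GoodOn G κ' i W :=
  fun x hx y hy => ⟨(h x hx y hy).1.congr hκ, fun hxy => ((h x hx y hy).2 hxy).congr hκ⟩

theorem GoodOn.union {S : Set V} (h : GoodOn G κ i W)
    (hnew : ∀ x ∈ W ∪ S, ∀ y ∈ S, y ∉ W → x ≠ y → PathIn G κ i (W ∪ S) x y 0 ∧
      (¬ (bridgeGraph G).Reachable x y → PathIn G κ i (W ∪ S) x y 1)) :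
    GoodOn G κ i (W ∪ S) := by
  intro x hx y hy
  by_cases hxy : x = y
  · subst hxy
    exact ⟨PathIn.nil hx, fun h => (h (Reachable.refl _)).elim⟩
  by_cases hyW : y ∈ W
  · by_cases hxW : x ∈ W
    · exact ⟨(h x hxW y hyW).1.mono Set.subset_union_left,
        fun hr => ((h x hxW y hyW).2 hr).mono Set.subset_union_left⟩
    · have := hnew y hy x (hx.resolve_left hxW) hxW (Ne.symm hxy)
      exact ⟨this.1.symm, fun hr => (this.2 fun h => hr h.symm).symm⟩
  · exact hnew x hx y (hy.resolve_left hyW) hyW hxy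

theorem GoodOn.insert_bridge (h : GoodOn G κ i W) {w v : V} (hw : w ∈ W) (hv : v ∉ W)
    (hadj : G.Adj w v) (hbr : G.IsBridge s(w, v)) (hκ : κ s(w, v) ≠ i) :
    GoodOn G κ i (W ∪ {v}) := by
  refine h.union fun x hx y hy _ hxy => ?_
  obtain rfl : y = v := hy
  have hx : x ∈ W := hx.resolve_right hxy
  have hwy : PathIn G κ i {w, y} w y 0 := by
    simpa [hκ] using PathIn.of_adj (κ := κ) (i := i) hadj
  have key : ∀ n, PathIn G κ i W x w n → PathIn G κ i (W ∪ {y}) x y n := fun n hn => by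
    refine (hn.append hwy ?_).mono ?_
    · rintro t ht (rfl | rfl)
      · rfl
      · exact (hv ht).elim
    · rintro t (ht | rfl | rfl)
      · exact Or.inl ht
      · exact Or.inl hw
      · exact Or.inr rfl
  refine ⟨key 0 (h x hx w hw).1, fun hr => key 1 ((h x hx w hw).2 fun hr' => hr ?_)⟩
  exact hr'.trans (Adj.reachable (bridgeGraph_adj.2 ⟨hbr, hadj.ne⟩))

theorem GoodOn.union_cycle (h : GoodOn G κ i W) {w v : V} (hw : w ∈ W) (hadj : G.Adj v w)
    {p : G.Walk v w} (hp : p.IsPath) (hpW : ∀ z ∈ p.support, z ∈ W → z = w)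
    (hcount : p.edges.countP (fun e => κ e = i) + (if κ s(v, w) = i then 1 else 0) = 1) :
    GoodOn G κ i (W ∪ {t | t ∈ p.support}) := by
  have hcyc := fun {x y} (hx : x ∈ p.support) (hy : y ∈ p.support) (hxy : x ≠ y) =>
    pathIn_of_cycle hp hadj hcount hx hy hxy
  refine h.union fun x hx y hy hyW hxy => ?_
  by_cases hxW : x ∈ W
  · have hwy : w ≠ y := fun h => hyW (h ▸ hw)
    have key : ∀ n, PathIn G κ i {t | t ∈ p.support} w y n →
        PathIn G κ i (W ∪ {t | t ∈ p.support}) x y n := fun n hn => by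
      have := (h x hxW w hw).1.append hn fun t ht ht' => hpW t ht' ht
      rwa [zero_add] at this
    have := hcyc p.end_mem_support hy hwy
    exact ⟨key 0 this.1, fun _ => key 1 this.2⟩
  · have := hcyc (hx.resolve_left hxW) hy hxy
    exact ⟨this.1.mono Set.subset_union_right, fun _ => this.2.mono Set.subset_union_right⟩

theorem GoodOn.union_ear (h : GoodOn G κ i W) {w q : V} (hw : w ∈ W) (hq : q ∈ W)
    (hwq : ¬ (bridgeGraph G).Reachable w q) {p : G.Walk w q} (hp : p.IsPath)
    (hpW : ∀ z ∈ p.support, z ∈ W → z = w ∨ z = q)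
    (hcount : p.edges.countP (fun e => κ e = i) = 0) :
    GoodOn G κ i (W ∪ {t | t ∈ p.support}) := by
  refine h.union fun x hx y hy hyW hxy => ?_
  by_cases hxW : x ∈ W
  · obtain ⟨A, B, m, n, hA, hB, hAB, hA', hB', hmn⟩ := exists_pathIn_split hp hy κ i
    obtain ⟨rfl, rfl⟩ : m = 0 ∧ n = 0 := by omega
    have viaw : ∀ n, PathIn G κ i W x w n →
        PathIn G κ i (W ∪ {t | t ∈ p.support}) x y n := fun n hn => by
      refine (hn.append hA fun t ht ht' => ?_).mono
        (Set.union_subset_union_right _ hA')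
      rcases hpW t (hA' t ht') ht with rfl | rfl
      · rfl
      · exact (hyW (hAB t ht' hB.right_mem ▸ ht)).elim
    have viaq : ∀ n, PathIn G κ i W x q n →
        PathIn G κ i (W ∪ {t | t ∈ p.support}) x y n := fun n hn => by
      refine (hn.append hB.symm fun t ht ht' => ?_).mono
        (Set.union_subset_union_right _ hB')
      rcases hpW t (hB' t ht') ht with rfl | rfl
      · exact (hyW (hAB t hA.left_mem ht' ▸ ht)).elim
      · rfl
    refine ⟨viaw 0 (h x hxW w hw).1, fun _ => ?_⟩
    by_cases hxw : (bridgeGraph G).Reachable x w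
    · exact viaq 1 ((h x hxW q hq).2 fun hxq => hwq (hxw.symm.trans hxq))
    · exact viaw 1 ((h x hxW w hw).2 hxw)
  · obtain ⟨x', y', hx'y', A, B, C, a, b, c, hA, hB, hC, hAC, hA', hB', hC', habc⟩ :=
      exists_pathIn_split₂ hp (hx.resolve_left hxW) hy hxy κ i
    obtain ⟨rfl, rfl, rfl⟩ : a = 0 ∧ b = 0 ∧ c = 0 := by omega
    have zero : PathIn G κ i (W ∪ {t | t ∈ p.support}) x' y' 0 :=
      hB.mono fun t ht => Or.inr (hB' t ht)
    have one : PathIn G κ i (W ∪ {t | t ∈ p.support}) x' y' (0 + (1 + 0)) := by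
      refine (hA.symm.append ((((h w hw q hq).2 hwq)).append hC.symm ?_) ?_).mono ?_
      · intro t ht ht'
        rcases hpW t (hC' t ht') ht with rfl | rfl
        · exact (hAC t hA.left_mem ht').elim
        · rfl
      · rintro t ht (ht' | ht')
        · rcases hpW t (hA' t ht) ht' with rfl | rfl
          · rfl
          · exact (hAC t ht hC.right_mem).elim
        · exact (hAC t ht ht').elim
      · rintro t (ht | ht | ht)
        · exact Or.inr (hA' t ht)
        · exact Or.inl ht
        · exact Or.inr (hC' t ht)
    rcases hx'y' with ⟨rfl, rfl⟩ | ⟨rfl, rfl⟩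
    · exact ⟨zero, fun _ => one⟩
    · exact ⟨zero.symm, fun _ => one.symm⟩

end Labelling

section Exists

variable {V : Type*} {G : SimpleGraph V}

/-- `W` carries a labelling good for the labels `1` and `2`. -/
def HasLabelling (G : SimpleGraph V) (W : Set V) : Prop :=
  ∃ κ : Sym2 V → ℕ, (∀ e, G.IsBridge e → κ e = 0) ∧ (∀ e, κ e ≠ 0 → ∀ z ∈ e, z ∈ W) ∧
    ∀ i, i = 1 ∨ i = 2 → GoodOn G κ i W

theorem HasLabelling.extend_of_not_isBridge (hG : G.Connected) {W : Set V}
    (h : HasLabelling G W) {w v : V} (hw : w ∈ W) (hv : v ∉ W) (hadj : G.Adj w v)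
    (hbr : ¬ G.IsBridge s(w, v)) : ∃ W', v ∈ W' ∧ W ⊆ W' ∧ HasLabelling G W' := by
  classical
  obtain ⟨κ, hκb, hκW, hgood⟩ := h
  obtain ⟨r⟩ := (hG.connected_delete_edge_of_not_isBridge hbr).preconnected v w
  obtain ⟨q, hq, p', hp', hp'W⟩ := exists_path_to_first_mem r hw
  set p : G.Walk v q := p'.mapLe (deleteEdges_le _) with hpdef
  have hp : p.IsPath := (Walk.isPath_mapLe _).2 hp'
  have hpW : ∀ z ∈ p.support, z ∈ W → z = q := by
    intro z hz
    rw [hpdef, Walk.support_mapLe_eq_support] at hz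
    exact hp'W z hz
  have hvw : s(w, v) ∉ p.edges := by
    rw [hpdef, Walk.edges_mapLe_eq_edges]
    intro hmem
    have := p'.edges_subset_edgeSet hmem
    simp at this
  clear_value p
  clear hp' hp'W r
  have hnot : ∀ e ∈ p.edges, ¬ ∀ z ∈ e, z ∈ W := by
    intro e he hall
    induction e with
    | h x y =>
      have hx := hpW x (p.fst_mem_support_of_mem_edges he) (hall x (by simp))
      have hy := hpW y (p.snd_mem_support_of_mem_edges he) (hall y (by simp))
      exact (p.adj_of_mem_edges he).ne (hx.trans hy.symm)
  have hκp : ∀ e ∈ p.edges, κ e = 0 := by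
    intro e he
    by_contra hne
    exact hnot e he (hκW e hne)
  have hκwv : κ s(w, v) = 0 := by
    by_contra hne
    exact hv (hκW _ hne v (by simp))
  by_cases hqw : q = w
  · subst hqw
    have hcyc : (Walk.cons hadj p).IsCycle := (Walk.cons_isCycle_iff p hadj).2 ⟨hp, hvw⟩
    cases p with
    | nil => exact (hv hq).elim
    | @cons _ v₂ _ hadj₂ p₂ =>
      have hne : s(v, v₂) ≠ s(q, v) := by
        intro h
        rw [← h] at hvw
        simp at hvw
      have hv₂ : s(v, v₂) ∉ p₂.edges := ((Walk.isTrail_cons _ _).1 hp.isTrail).2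
      let κ' : Sym2 V → ℕ := fun e => if e = s(q, v) then 1 else if e = s(v, v₂) then 2 else κ e
      have h₁ : κ' s(q, v) = 1 := by simp [κ']
      have h₂ : κ' s(v, v₂) = 2 := by simp only [κ', if_neg hne, if_true]
      have h₃ : ∀ e ∈ p₂.edges, κ' e = 0 := by
        intro e he
        have he₁ : e ≠ s(q, v) := by
          rintro rfl
          exact hvw (by simp [he])
        have he₂ : e ≠ s(v, v₂) := by
          rintro rfl
          exact hv₂ he
        simp only [κ', if_neg he₁, if_neg he₂]
        exact hκp e (by simp [he])
      refine ⟨W ∪ {t | t ∈ (Walk.cons hadj₂ p₂).support}, Or.inr (by simp),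
        Set.subset_union_left, κ', ?_, ?_, ?_⟩
      · intro e he
        have he₁ : e ≠ s(q, v) := by
          rintro rfl
          exact hbr he
        have he₂ : e ≠ s(v, v₂) := by
          rintro rfl
          exact he.notMem_edges_of_isCycle hcyc (by simp)
        simp only [κ', if_neg he₁, if_neg he₂]
        exact hκb e he
      · intro e he z hz
        by_cases he₁ : e = s(q, v)
        · subst he₁
          rcases Sym2.mem_iff.1 hz with rfl | rfl
          · exact Or.inl hq
          · exact Or.inr (by simp)
        by_cases he₂ : e = s(v, v₂)
        · subst he₂
          rcases Sym2.mem_iff.1 hz with rfl | rfl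
          · exact Or.inr (by simp)
          · exact Or.inr (by simp)
        simp only [κ', if_neg he₁, if_neg he₂] at he
        exact Or.inl (hκW e he z hz)
      · intro i hi
        refine GoodOn.union_cycle ((hgood i hi).congr ?_) hq hadj.symm hp hpW ?_
        · intro e he
          have he₁ : e ≠ s(q, v) := by
            rintro rfl
            exact hv (he v (by simp))
          have he₂ : e ≠ s(v, v₂) := by
            rintro rfl
            exact hv (he v (by simp))
          simp only [κ', if_neg he₁, if_neg he₂]
        · have h0 : p₂.edges.countP (fun e => κ' e = i) = 0 := by
            rw [List.countP_eq_zero]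
            intro e he
            rw [h₃ e he]
            rcases hi with rfl | rfl <;> simp
          rw [Walk.edges_cons, List.countP_cons, h0, h₂, Sym2.eq_swap, h₁]
          rcases hi with rfl | rfl <;> simp
  · refine ⟨W ∪ {t | t ∈ (Walk.cons hadj p).support}, Or.inr (by simp),
        Set.subset_union_left, κ, hκb, fun e he z hz => Or.inl (hκW e he z hz), ?_⟩
    have hear : (Walk.cons hadj p).IsPath :=
      (Walk.cons_isPath_iff _ _).2 ⟨hp, fun h => hqw (hpW w h hw).symm⟩
    intro i hi
    refine (hgood i hi).union_ear hw hq ?_ hear ?_ ?_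
    · intro hr
      obtain ⟨b, hb⟩ := hr.exists_isPath
      obtain ⟨p₀, hp₀, hp₀W, -⟩ := (hgood i hi w hw q hq).1
      have := edges_eq_of_bridge_path hG b hb _ hear
      rw [← edges_eq_of_bridge_path hG b hb _ hp₀] at this
      exact hv (hp₀W v (p₀.snd_mem_support_of_mem_edges (t := w) (by rw [← this]; simp)))
    · intro z hz hzW
      rw [Walk.support_cons, List.mem_cons] at hz
      exact hz.imp_right fun h => hpW z h hzW
    · rw [List.countP_eq_zero]
      intro e he
      rw [Walk.edges_cons, List.mem_cons] at he
      have : κ e = 0 := by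
        rcases he with rfl | he
        · exact hκwv
        · exact hκp e he
      rw [this]
      rcases hi with rfl | rfl <;> simp

theorem HasLabelling.extend (hG : G.Connected) {W : Set V}
    (h : HasLabelling G W) {w v : V} (hw : w ∈ W) (hv : v ∉ W) (hadj : G.Adj w v) :
    ∃ W', v ∈ W' ∧ W ⊆ W' ∧ HasLabelling G W' := by
  by_cases hbr : G.IsBridge s(w, v)
  · obtain ⟨κ, hκb, hκW, hgood⟩ := h
    refine ⟨W ∪ {v}, Or.inr rfl, Set.subset_union_left, κ, hκb,
      fun e he z hz => Or.inl (hκW e he z hz), fun i hi => ?_⟩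
    refine (hgood i hi).insert_bridge hw hv hadj hbr ?_
    rw [hκb _ hbr]
    rcases hi with rfl | rfl <;> simp
  · exact h.extend_of_not_isBridge hG hw hv hadj hbr

theorem hasLabelling_univ [Finite V] (hG : G.Connected) : HasLabelling G (Set.univ : Set V) := by
  obtain ⟨v₀⟩ := hG.nonempty
  have h₀ : HasLabelling G {v₀} := by
    refine ⟨fun _ => 0, fun _ _ => rfl, fun e he => (he rfl).elim, fun i _ => ?_⟩
    rintro x rfl y rfl
    exact ⟨PathIn.nil rfl, fun h => (h (Reachable.refl _)).elim⟩
  obtain ⟨W, hW, hmax⟩ := (Set.toFinite {W : Set V | HasLabelling G W}).exists_le_maximal h₀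
  suffices W = Set.univ from this ▸ hmax.1
  by_contra hne
  obtain ⟨u, hu⟩ := (Set.ne_univ_iff_exists_notMem _).1 hne
  obtain ⟨r⟩ := hG.preconnected v₀ u
  obtain ⟨d, -, hd₁, hd₂⟩ := r.exists_boundary_dart W (hW rfl) hu
  obtain ⟨W', hv, hWW', hW'⟩ := HasLabelling.extend hG hmax.1 hd₁ hd₂ d.adj
  exact hd₂ (hmax.2 hW' hWW' hv)

end Exists

section Colorings

variable {V : Type*} {G : SimpleGraph V}

theorem length_filter_eq_countP (l : List (Sym2 V)) (c : Sym2 V → ℕ) (j : ℕ) :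
    (l.filter (fun e => c e = j)).length = l.countP (fun e => c e = j) :=
  List.countP_eq_length_filter.symm

theorem exists_cfConn_coloring [Finite V] (hG : G.Connected) :
    ∃ c : Sym2 V → ℕ, (∀ e ∈ G.edgeSet, c e < cfConn G) ∧ IsCFConnColoring G c := by
  classical
  have hne : {k | ∃ c : Sym2 V → ℕ, (∀ e ∈ G.edgeSet, c e < k) ∧
      IsCFConnColoring G c}.Nonempty := by
    obtain ⟨n, ⟨f⟩⟩ := Finite.exists_equiv_fin (Sym2 V)
    refine ⟨n, fun e => f e, fun e _ => (f e).2, fun u v huv => ?_⟩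
    obtain ⟨p, hp⟩ := (hG.preconnected u v).exists_isPath
    refine ⟨p, hp, ?_⟩
    cases p with
    | nil => exact (huv rfl).elim
    | @cons _ w _ h p =>
      refine ⟨f s(u, w), ?_⟩
      have hnot := ((Walk.isTrail_cons _ _).1 hp.isTrail).2
      rw [length_filter_eq_countP, Walk.edges_cons, List.countP_cons, List.countP_eq_zero.2]
      · simp
      · intro e he
        simp only [decide_eq_true_eq]
        intro heq
        exact hnot (f.injective (Fin.ext heq) ▸ he)
  exact Nat.sInf_mem hne

theorem cfConn_le {k : ℕ} {c : Sym2 V → ℕ} (hc : ∀ e ∈ G.edgeSet, c e < k)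
    (h : IsCFConnColoring G c) : cfConn G ≤ k :=
  Nat.sInf_le ⟨c, hc, h⟩

theorem two_le_cfConn [Finite V] (hG : G.Connected) (hdiam : 2 ≤ G.diam) : 2 ≤ cfConn G := by
  obtain ⟨c, hc, hcf⟩ := exists_cfConn_coloring hG
  have := hG.nonempty
  obtain ⟨u, v, huv⟩ := G.exists_dist_eq_diam
  by_contra hlt
  have huv' : u ≠ v := by
    rintro rfl
    rw [dist_self] at huv
    omega
  obtain ⟨p, -, j, hj⟩ := hcf u v huv'
  have hall : ∀ e ∈ p.edges, c e = 0 := fun e he => by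
    have := hc e (p.edges_subset_edgeSet he)
    omega
  have hlen : p.length ≤ 1 := by
    rw [length_filter_eq_countP] at hj
    rw [← Walk.length_edges, ← hj]
    by_cases h0 : j = 0
    · subst h0
      exact (List.countP_eq_length.2 (by simpa using hall)).ge
    · rw [List.countP_eq_zero.2] at hj
      · omega
      · intro e he
        simpa [hall e he] using Ne.symm h0
  have := dist_le p
  omega

theorem bddAbove_cfConn_components [Finite V] :
    BddAbove {n | ∃ comp : (bridgeGraph G).ConnectedComponent,
      n = cfConn ((bridgeGraph G).induce comp.supp)} := by
  refine Set.Finite.bddAbove ?_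
  refine (Set.finite_range fun comp : (bridgeGraph G).ConnectedComponent =>
    cfConn ((bridgeGraph G).induce comp.supp)).subset ?_
  rintro n ⟨comp, rfl⟩
  exact ⟨comp, rfl⟩

theorem cfConn_component_le_hG [Finite V] (comp : (bridgeGraph G).ConnectedComponent) :
    cfConn ((bridgeGraph G).induce comp.supp) ≤ hG G :=
  le_csSup bddAbove_cfConn_components ⟨comp, rfl⟩

/-- A path in a component of the graph of bridges, viewed in the whole graph of bridges. -/
theorem exists_component_path {comp : (bridgeGraph G).ConnectedComponent} {u v : comp.supp}
    (b : ((bridgeGraph G).induce comp.supp).Walk u v) (hb : b.IsPath) :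
    ∃ b' : (bridgeGraph G).Walk (u : V) v, b'.IsPath ∧
      b'.edges = b.edges.map (Sym2.map Subtype.val) :=
  ⟨b.map (Embedding.induce comp.supp).toHom,
    (Walk.isPath_map_iff_of_injective Subtype.val_injective).2 hb,
    Walk.edges_map _ _⟩

theorem connected_component (comp : (bridgeGraph G).ConnectedComponent) :
    ((bridgeGraph G).induce comp.supp).Connected :=
  comp.connected_toSimpleGraph

theorem cfConn_component_le [Finite V] (hG : G.Connected)
    (comp : (bridgeGraph G).ConnectedComponent) :
    cfConn ((bridgeGraph G).induce comp.supp) ≤ cfConn G := by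
  obtain ⟨c, hc, hcf⟩ := exists_cfConn_coloring hG
  refine cfConn_le (c := fun e => c (e.map Subtype.val)) ?_ ?_
  · intro e he
    refine hc _ ?_
    induction e with
    | h x y => exact bridgeGraph_le hG he
  · intro u v huv
    obtain ⟨p, hp, j, hj⟩ := hcf u v fun h => huv (Subtype.ext h)
    obtain ⟨b, hb⟩ := ((connected_component comp).preconnected u v).exists_isPath
    obtain ⟨b', hb', hbb'⟩ := exists_component_path b hb
    refine ⟨b, hb, j, ?_⟩
    rw [edges_eq_of_bridge_path hG b' hb' p hp, hbb', length_filter_eq_countP,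
      List.countP_map] at hj
    rw [← List.countP_eq_length_filter, ← hj]
    rfl

theorem hG_le_cfConn [Finite V] (hconn : G.Connected) : hG G ≤ cfConn G := by
  have := hconn.nonempty
  refine csSup_le ?_ ?_
  · exact ⟨_, (bridgeGraph G).connectedComponentMk (Classical.arbitrary V), rfl⟩
  · rintro n ⟨comp, rfl⟩
    exact cfConn_component_le hconn comp

/-- Colorings of the components of the graph of bridges combine to one of all bridges. -/
theorem exists_bridge_coloring [Finite V] (hconn : G.Connected) :
    ∃ c : Sym2 V → ℕ, (∀ e, G.IsBridge e → c e < hG G) ∧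
      ∀ u v, u ≠ v → (bridgeGraph G).Reachable u v → ∃ p : G.Walk u v, p.IsPath ∧
        (∀ e ∈ p.edges, G.IsBridge e) ∧ ∃ j, p.edges.countP (fun e => c e = j) = 1 := by
  choose d hd hdcf using fun comp : (bridgeGraph G).ConnectedComponent =>
    exists_cfConn_coloring (connected_component comp)
  have hinj : ∀ comp : (bridgeGraph G).ConnectedComponent,
      Function.Injective (Sym2.map (Subtype.val : comp.supp → V)) :=
    fun comp => Sym2.map.injective Subtype.val_injective
  let D : (bridgeGraph G).ConnectedComponent → Sym2 V → ℕ := fun comp =>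
    Function.extend (Sym2.map Subtype.val) (d comp) 0
  let c : Sym2 V → ℕ := fun e => D ((bridgeGraph G).connectedComponentMk e.out.1) e
  have hc : ∀ (comp : (bridgeGraph G).ConnectedComponent) (e : Sym2 comp.supp),
      c (e.map Subtype.val) = d comp e := by
    intro comp e
    have hmem : (e.map Subtype.val).out.1 ∈ comp.supp := by
      obtain ⟨x, -, hx⟩ := Sym2.mem_map.1 (Sym2.out_fst_mem (e.map Subtype.val))
      rw [← hx]
      exact x.2
    have hcomp : (bridgeGraph G).connectedComponentMk (e.map Subtype.val).out.1 = comp := hmem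
    change D _ _ = _
    rw [hcomp]
    exact (hinj comp).extend_apply _ _ _
  refine ⟨c, fun e he => ?_, fun u v huv hr => ?_⟩
  · induction e with
    | h x y =>
      have hadj : (bridgeGraph G).Adj x y := bridgeGraph_adj.2 ⟨he, fun h => by
        subst h
        exact he (Reachable.refl _)⟩
      let comp := (bridgeGraph G).connectedComponentMk x
      have hy : y ∈ comp.supp := ConnectedComponent.sound hadj.symm.reachable
      have := hc comp s(⟨x, rfl⟩, ⟨y, hy⟩)
      rw [Sym2.map_mk] at this
      refine lt_of_eq_of_lt this ((hd comp _ ?_).trans_le (cfConn_component_le_hG comp))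
      exact hadj
  · let comp := (bridgeGraph G).connectedComponentMk u
    have hv : v ∈ comp.supp := ConnectedComponent.sound hr.symm
    obtain ⟨b, hb, j, hj⟩ := hdcf comp ⟨u, rfl⟩ ⟨v, hv⟩ fun h => huv (congrArg Subtype.val h)
    obtain ⟨b', hb', hbb'⟩ := exists_component_path b hb
    refine ⟨b'.mapLe (bridgeGraph_le hconn), (Walk.isPath_mapLe _).2 hb', ?_, j, ?_⟩
    · intro e he
      rw [Walk.edges_mapLe_eq_edges] at he
      exact isBridge_of_mem_edges he
    · rw [Walk.edges_mapLe_eq_edges, hbb', List.countP_map, ← hj, ← List.countP_eq_length_filter]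
      refine List.countP_congr fun e _ => ?_
      simp [hc]

theorem countP_add_countP_le {α : Type*} (l : List α) {P Q R : α → Bool}
    (hP : ∀ a, P a → R a) (hQ : ∀ a, Q a → R a) (hPQ : ∀ a, P a → ¬ Q a) :
    l.countP P + l.countP Q ≤ l.countP R := by
  induction l with
  | nil => simp
  | cons a l ih =>
    simp only [List.countP_cons]
    have := hP a
    have := hQ a
    have := hPQ a
    grind

open Classical in
theorem countP_color_eq {κ c b : Sym2 V → ℕ} {i j : ℕ} (hκ : ∀ e, G.IsBridge e → κ e = 0)
    (hi : i ≠ 0) (hcb : ∀ e, G.IsBridge e → c e = b e)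
    (hcκ : ∀ e, ¬ G.IsBridge e → (c e = j ↔ κ e = i)) (l : List (Sym2 V)) :
    l.countP (fun e => c e = j) =
      l.countP (fun e => decide (G.IsBridge e ∧ b e = j)) + l.countP (fun e => κ e = i) := by
  induction l with
  | nil => simp
  | cons e l ih =>
    simp only [List.countP_cons, ih]
    by_cases he : G.IsBridge e
    · simp only [hκ e he, hcb e he, he, true_and, decide_eq_true_eq, hi.symm, if_false]
      omega
    · simp only [hcκ e he, he, false_and, decide_eq_true_eq, if_false]
      omega

open Classical in
/-- If the bridges separating `u` and `v` have color `j` at most once, a suitable choice of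
the remaining edges gives a path on which `j` appears exactly once. -/
theorem exists_path_unique_color {κ c b : Sym2 V → ℕ} {i j : ℕ}
    (hκ : ∀ e, G.IsBridge e → κ e = 0) (hi : i ≠ 0) (hcb : ∀ e, G.IsBridge e → c e = b e)
    (hcκ : ∀ e, ¬ G.IsBridge e → (c e = j ↔ κ e = i)) (hgood : GoodOn G κ i Set.univ)
    {u v : V} (huv : ¬ (bridgeGraph G).Reachable u v) {p : G.Walk u v} (hp : p.IsPath)
    (hle : p.edges.countP (fun e => decide (G.IsBridge e ∧ b e = j)) ≤ 1) :
    ∃ q : G.Walk u v, q.IsPath ∧ q.edges.countP (fun e => c e = j) = 1 := by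
  obtain ⟨h₀, h₁⟩ := hgood u trivial v trivial
  rcases Nat.le_one_iff_eq_zero_or_eq_one.1 hle with h | h
  · obtain ⟨q, hq, -, hqn⟩ := h₁ huv
    refine ⟨q, hq, ?_⟩
    rw [countP_color_eq hκ hi hcb hcκ, countP_bridges_eq b j hq hp, h, hqn]
  · obtain ⟨q, hq, -, hqn⟩ := h₀
    refine ⟨q, hq, ?_⟩
    rw [countP_color_eq hκ hi hcb hcκ, countP_bridges_eq b j hq hp, h, hqn]

open Classical in
/-- A path joining vertices not connected by bridges contains an edge that is no bridge. -/
theorem countP_isBridge_lt_length {u v : V} (huv : ¬ (bridgeGraph G).Reachable u v)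
    (p : G.Walk u v) : p.edges.countP (fun e => decide (G.IsBridge e)) < p.length := by
  rw [← Walk.length_edges]
  refine lt_of_le_of_ne List.countP_le_length fun h => huv ?_
  rw [List.countP_eq_length] at h
  refine ⟨p.transfer _ fun e he => ?_⟩
  have hbr := h e he
  have hadj := p.edges_subset_edgeSet he
  induction e with
  | h x y => exact bridgeGraph_adj.2 ⟨by simpa using hbr, hadj.ne⟩

/-- Pairs joined by bridges and all other pairs can be treated separately. -/
theorem cfConn_le_of_extension {b c : Sym2 V → ℕ} {k : ℕ}
    (hcb : ∀ e, G.IsBridge e → c e = b e) (hk : ∀ e, c e < k)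
    (hb : ∀ u v, u ≠ v → (bridgeGraph G).Reachable u v → ∃ p : G.Walk u v, p.IsPath ∧
      (∀ e ∈ p.edges, G.IsBridge e) ∧ ∃ j, p.edges.countP (fun e => b e = j) = 1)
    (hc : ∀ u v, ¬ (bridgeGraph G).Reachable u v → ∃ j, ∃ p : G.Walk u v, p.IsPath ∧
      p.edges.countP (fun e => c e = j) = 1) : cfConn G ≤ k := by
  refine cfConn_le (fun e _ => hk e) fun u v huv => ?_
  by_cases hr : (bridgeGraph G).Reachable u v
  · obtain ⟨p, hp, hbr, j, hj⟩ := hb u v huv hr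
    refine ⟨p, hp, j, ?_⟩
    rw [length_filter_eq_countP, ← hj]
    exact List.countP_congr fun e he => by rw [hcb e (hbr e he)]
  · obtain ⟨j, p, hp, hj⟩ := hc u v hr
    exact ⟨p, hp, j, (length_filter_eq_countP _ _ _).trans hj⟩

theorem cfConn_le_two [Finite V] (hconn : G.Connected) (h : hG G ≤ 1) : cfConn G ≤ 2 := by
  classical
  obtain ⟨κ, hκ, -, hgood⟩ := hasLabelling_univ hconn
  obtain ⟨b, hbk, hb⟩ := exists_bridge_coloring hconn
  have hcb : ∀ e, G.IsBridge e →
      (if G.IsBridge e then b e else if κ e = 1 then 1 else 0) = b e := fun e he => if_pos he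
  refine cfConn_le_of_extension hcb (fun e => ?_) hb fun u v huv => ⟨1, ?_⟩
  · split_ifs with he
    · have := hbk e he
      omega
    · omega
    · omega
  · obtain ⟨p, hp⟩ := (hconn.preconnected u v).exists_isPath
    refine exists_path_unique_color hκ one_ne_zero hcb (fun e he => ?_)
      (hgood 1 (Or.inl rfl)) huv hp ?_
    · rw [if_neg he]
      split_ifs with h₁ <;> simp [h₁]
    · rw [List.countP_eq_zero.2]
      · omega
      · intro e _
        simp only [decide_eq_true_eq]
        rintro ⟨he, he'⟩
        have := hbk e he
        omega

theorem cfConn_le_hG [Finite V] (hconn : G.Connected) (hdist : ∀ u v, G.dist u v ≤ 4)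
    (h : 3 ≤ hG G) : cfConn G ≤ hG G := by
  classical
  obtain ⟨κ, hκ, -, hgood⟩ := hasLabelling_univ hconn
  obtain ⟨b, hbk, hb⟩ := exists_bridge_coloring hconn
  have hcb : ∀ e, G.IsBridge e →
      (if G.IsBridge e then b e else if κ e = 1 then 0 else if κ e = 2 then 1 else 2) = b e :=
    fun e he => if_pos he
  refine cfConn_le_of_extension hcb (fun e => ?_) hb fun u v huv => ?_
  · split_ifs with he
    · exact hbk e he
    all_goals omega
  · obtain ⟨p, hp, hlen⟩ := (hconn.preconnected u v).exists_path_of_dist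
    have hlt := countP_isBridge_lt_length huv p
    have hd := hdist u v
    have hsum := countP_add_countP_le p.edges
      (P := fun e => decide (G.IsBridge e ∧ b e = 0))
      (Q := fun e => decide (G.IsBridge e ∧ b e = 1))
      (R := fun e => decide (G.IsBridge e))
      (fun e => by simp only [decide_eq_true_eq]; exact fun h => h.1)
      (fun e => by simp only [decide_eq_true_eq]; exact fun h => h.1)
      (fun e => by simp only [decide_eq_true_eq]; omega)
    by_cases h₀ : p.edges.countP (fun e => decide (G.IsBridge e ∧ b e = 0)) ≤ 1
    · refine ⟨0, exists_path_unique_color hκ one_ne_zero hcb (fun e he => ?_)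
        (hgood 1 (Or.inl rfl)) huv hp h₀⟩
      rw [if_neg he]
      split_ifs <;> simp_all
    · refine ⟨1, exists_path_unique_color hκ two_ne_zero hcb (fun e he => ?_)
        (hgood 2 (Or.inr rfl)) huv hp (by omega)⟩
      rw [if_neg he]
      split_ifs <;> simp_all

end Colorings

/-- For a connected graph `G` of diameter `4`: if `h(G) ≥ 3` then `cfc(G) = h(G)`,
and if `h(G) ≤ 1` then `cfc(G) = 2`. -/
theorem cfConn_of_diam_four {V : Type*} [Fintype V] (G : SimpleGraph V)
    (hconn : G.Connected) (hdiam : G.diam = 4) :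
    (3 ≤ hG G → cfConn G = hG G) ∧ (hG G ≤ 1 → cfConn G = 2) := by

  refine ⟨fun h => le_antisymm (cfConn_le_hG hconn (fun u v => ?_) h) (hG_le_cfConn hconn),
    fun h => le_antisymm (cfConn_le_two hconn h) (two_le_cfConn hconn (by omega))⟩
  rw [← hdiam]
  exact dist_le_diam (ediam_ne_top_of_diam_ne_zero (by omega))
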